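/- Over the binary alphabet with E the letter-exchanging antimorphism, every finite word w with #Pal_E(w) = |w| + 1 − γ_E(w) (i.e., every E-rich finite word) is of the form (01)^n, (10)^n, (01)^n 0, or (10)^n 1 for some n ∈ ℕ. -/

import Mathlib

/-- The antimorphism `E` on `{0,1}*`: reversal composed with the exchange of
the letters `0` and `1`. -/
def Ebar (w : List (Fin 2)) : List (Fin 2) := (w.map (fun a => a + 1)).reverse

def EPal (w : List (Fin 2)) : Set (List (Fin 2)) := {v | v <:+: w ∧ Ebar v = v}

theorem fin2_ne {a b : Fin 2} (h : a ≠ b) : b = a + 1 := by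
  revert a b; decide

theorem fin2_succ_ne (a : Fin 2) : a + 1 ≠ a := by
  revert a; decide

theorem EPal_finite (w : List (Fin 2)) : (EPal w).Finite := by
  refine (w.sublists.toFinset.finite_toSet).subset ?_
  intro v hv
  simpa using hv.1.sublist

theorem Ebar_append (u v : List (Fin 2)) : Ebar (u ++ v) = Ebar v ++ Ebar u := by
  simp [Ebar]

theorem pal_short {a : Fin 2} {w v₁ v₂ : List (Fin 2)} (h1 : v₁ <+: a :: w) (h2 : v₂ <+: a :: w)
    (e1 : Ebar v₁ = v₁) (e2 : Ebar v₂ = v₂) (hl : v₁.length < v₂.length) : v₁ <:+: w := by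
  obtain ⟨t, ht⟩ := List.prefix_of_prefix_length_le h1 h2 hl.le
  have h3 : v₂ = Ebar t ++ v₁ := by
    rw [← e2, ← ht, Ebar_append, e1]
  rcases hE : Ebar t with _ | ⟨b, s⟩
  · rw [hE] at h3
    simp at h3
    rw [h3] at hl
    omega
  · rw [hE] at h3
    obtain ⟨r, hr⟩ := h2
    rw [h3] at hr
    simp at hr
    exact ⟨s, r, by simpa using hr.2⟩

theorem EPal_cons_le (a : Fin 2) (w : List (Fin 2)) :
    (EPal (a :: w)).ncard ≤ (EPal w).ncard + 1 := by
  by_cases hx : ∃ x, x ∈ EPal (a :: w) ∧ x ∉ EPal w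
  · obtain ⟨x, hx, hx'⟩ := hx
    have key : ∀ y, y ∈ EPal (a :: w) → y ∉ EPal w → y <+: a :: w := by
      intro y hy hy'
      rcases List.infix_cons_iff.1 hy.1 with h | h
      · exact h
      · exact absurd ⟨h, hy.2⟩ hy'
    have hsub : EPal (a :: w) ⊆ insert x (EPal w) := by
      intro y hy
      by_cases hy' : y ∈ EPal w
      · exact Or.inr hy'
      · left
        have px := key x hx hx'
        have py := key y hy hy'
        rcases lt_trichotomy x.length y.length with h | h | h
        · exact absurd ⟨pal_short px py hx.2 hy.2 h, hx.2⟩ hx'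
        · exact ((List.prefix_of_prefix_length_le px py h.le).eq_of_length h).symm
        · exact absurd ⟨pal_short py px hy.2 hx.2 h, hy.2⟩ hy'
    exact (Set.ncard_le_ncard hsub ((EPal_finite w).insert x)).trans (Set.ncard_insert_le _ _)
  · push Not at hx
    exact (Set.ncard_le_ncard hx (EPal_finite w)).trans (Nat.le_succ _)

theorem not_pal_single (a : Fin 2) : Ebar [a] ≠ [a] := by
  revert a; decide

theorem EPal_single (a : Fin 2) : (EPal [a]).ncard = 1 := by
  have : EPal [a] = {[]} := by
    ext v
    constructor
    · rintro ⟨h1, h2⟩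
      rcases v with _ | ⟨b, _ | ⟨c, v⟩⟩
      · rfl
      · exact absurd h2 (not_pal_single b)
      · have := h1.length_le
        simp at this
    · rintro rfl
      exact ⟨List.nil_infix, rfl⟩
  rw [this, Set.ncard_singleton]

theorem EPal_le (w : List (Fin 2)) (a : Fin 2) : (EPal (a :: w)).ncard ≤ w.length + 1 := by
  induction w generalizing a with
  | nil => simp [EPal_single]
  | cons b w ih =>
    have := EPal_cons_le a (b :: w)
    have := ih b
    simp
    omega

theorem chain_no_sq {b : Fin 2} {w : List (Fin 2)} (hc : w.IsChain (· ≠ ·)) : ¬ [b, b] <:+: w := by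
  intro h
  have := hc.infix h
  simp at this

theorem rich_chain (w : List (Fin 2)) (a : Fin 2) (h : (EPal (a :: w)).ncard = w.length + 1) :
    (a :: w).IsChain (· ≠ ·) := by
  induction w generalizing a with
  | nil => simp
  | cons b w ih =>
    have h1 := EPal_cons_le a (b :: w)
    have h2 := EPal_le w b
    simp at h
    have hc := ih b (by omega)
    rw [List.isChain_cons_cons]
    refine ⟨?_, hc⟩
    rintro rfl
    have hsub : EPal (a :: a :: w) ⊆ EPal (a :: w) := by
      rintro v ⟨hv, he⟩
      refine ⟨?_, he⟩
      rcases List.infix_cons_iff.1 hv with hp | hp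
      swap
      · exact hp
      rcases v with _ | ⟨c, _ | ⟨d, v⟩⟩
      · exact List.nil_infix
      · exact absurd he (not_pal_single c)
      · exfalso
        have hp' := hp
        simp only [List.cons_prefix_cons] at hp'
        obtain ⟨rfl, rfl, _⟩ := hp'
        have hs : [d + 1, d + 1] <:+: d :: d :: w := by
          refine List.IsInfix.trans ?_ hv
          refine List.IsSuffix.isInfix ⟨Ebar v, ?_⟩
          rw [← he]
          simp [Ebar]
        rcases List.infix_cons_iff.1 hs with hq | hq
        · simp only [List.cons_prefix_cons] at hq
          exact fin2_succ_ne _ hq.1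
        · exact chain_no_sq hc hq
    have := Set.ncard_le_ncard hsub (EPal_finite _)
    omega

theorem chain_form : ∀ (w : List (Fin 2)) (a : Fin 2), (a :: w).IsChain (· ≠ ·) → ∃ n : ℕ,
    a :: w = (List.replicate n [a, a + 1]).flatten ∨
    a :: w = (List.replicate n [a, a + 1]).flatten ++ [a]
  | [], a, _ => ⟨0, by simp⟩
  | [b], a, h => ⟨1, by
      simp at h
      simp [fin2_ne h]⟩
  | b :: c :: w, a, h => by
      simp only [List.isChain_cons_cons] at h
      obtain ⟨h1, h2, h3⟩ := h
      obtain rfl := fin2_ne h1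
      have : c = a := by
        have key : ∀ x y : Fin 2, x + 1 ≠ y → y = x := by decide
        exact key _ _ h2
      subst this
      obtain ⟨n, hn⟩ := chain_form w c h3
      refine ⟨n + 1, ?_⟩
      simpa [List.replicate_succ] using hn

theorem gamma_one (a : Fin 2) (w : List (Fin 2)) :
    {s : Set (Fin 2) | ∃ b : Fin 2, b ∈ a :: w ∧ b + 1 ≠ b ∧ s = {b, b + 1}}.ncard = 1 := by
  have hu : ∀ b : Fin 2, ({b, b + 1} : Set (Fin 2)) = Set.univ := by
    intro b
    ext x
    simp
    revert x b; decide
  rw [Set.ncard_eq_one]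
  refine ⟨Set.univ, ?_⟩
  ext s
  constructor
  · rintro ⟨b, _, _, rfl⟩
    exact hu b
  · rintro rfl
    exact ⟨a, by simp, fin2_succ_ne a, (hu a).symm⟩

/-- Every `E`-rich finite binary word, i.e. every `w` with
`#Pal_E(w) = |w| + 1 - γ_E(w)`, is of the form `(01)^n`, `(10)^n`,
`(01)^n 0` or `(10)^n 1`. -/
theorem Erich_binary_words (w : List (Fin 2))
    (h : {v : List (Fin 2) | v <:+: w ∧ Ebar v = v}.ncard =
        w.length + 1 -
          {s : Set (Fin 2) | ∃ a : Fin 2, a ∈ w ∧ a + 1 ≠ a ∧ s = {a, a + 1}}.ncard) :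
    ∃ n : ℕ,
      w = (List.replicate n ([0, 1] : List (Fin 2))).flatten ∨
      w = (List.replicate n ([1, 0] : List (Fin 2))).flatten ∨
      w = (List.replicate n ([0, 1] : List (Fin 2))).flatten ++ [0] ∨
      w = (List.replicate n ([1, 0] : List (Fin 2))).flatten ++ [1] := by
  rcases w with _ | ⟨a, w⟩
  · exact ⟨0, by simp⟩
  · rw [gamma_one] at h
    have h' : (EPal (a :: w)).ncard = w.length + 1 := by
      simpa [EPal] using h
    obtain ⟨n, hn⟩ := chain_form w a (rich_chain w a h')
    refine ⟨n, ?_⟩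
    have ha : a = 0 ∨ a = 1 := by
      have key : ∀ x : Fin 2, x = 0 ∨ x = 1 := by decide
      exact key a
    have h11 : (1 + 1 : Fin 2) = 0 := rfl
    rcases ha with rfl | rfl
    · rw [zero_add] at hn
      tauto
    · rw [h11] at hn
      tauto
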